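/- arXiv:1711.07737 — 8 statements merged into one kernel-verified Lean document; each statement's English description precedes it below -/
import Mathlib

section
/- Let X1,...,Xk be irreducible, complete, finite-rank median spaces and let X = X1 × ... × Xk be their ℓ1-product. Then every closed convex subset C ⊆ X is of the form C1 × ... × Ck, where each Ci is a closed convex subset of Xi; in fact Ci is the image of C under the projection p_i. -/
open Metric Filter Set

universe u

/-- The metric interval between `a` and `b`: points lying between `a` and `b`. -/
def mInterval {X : Type u} [MetricSpace X] (a b : X) : Set X :=
  {c : X | dist a c + dist c b = dist a b}

/-- A subset of a metric space is convex if it contains the interval between any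
two of its points. -/
def MConvex {X : Type u} [MetricSpace X] (C : Set X) : Prop :=
  ∀ a ∈ C, ∀ b ∈ C, mInterval a b ⊆ C

/-- `w` is the median of `x, y, z`. -/
def IsMedianPoint {X : Type u} [MetricSpace X] (x y z w : X) : Prop :=
  w ∈ mInterval x y ∧ w ∈ mInterval y z ∧ w ∈ mInterval x z

/-- A median space: every triple of points has a unique median. -/
def IsMedianSpace (X : Type u) [MetricSpace X] : Prop :=
  ∀ x y z : X, ∃! w : X, IsMedianPoint x y z w

/-- A halfspace: a subset such that both it and its complement are convex. -/
def IsHalfspace {X : Type u} [MetricSpace X] (h : Set X) : Prop :=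
  MConvex h ∧ MConvex hᶜ

/-- Two halfspaces are transverse. -/
def Transv {X : Type u} [MetricSpace X] (h k : Set X) : Prop :=
  (h ∩ k).Nonempty ∧ (h ∩ kᶜ).Nonempty ∧ (hᶜ ∩ k).Nonempty ∧ (hᶜ ∩ kᶜ).Nonempty

/-- A wall: an unordered pair `{h, hᶜ}` with `h` a halfspace. -/
def IsWall {X : Type u} [MetricSpace X] (w : Set (Set X)) : Prop :=
  ∃ h : Set X, IsHalfspace h ∧ w = {h, hᶜ}

/-- Two walls are transverse if a side of the first is transverse to a side of the second. -/
def WallTransv {X : Type u} [MetricSpace X] (w₁ w₂ : Set (Set X)) : Prop :=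
  ∃ h ∈ w₁, ∃ k ∈ w₂, Transv h k

/-- `X` has rank at most `r`: every set of pairwise transverse walls has cardinality `≤ r`. -/
def RankLE (X : Type u) [MetricSpace X] (r : ℕ) : Prop :=
  ∀ W : Finset (Set (Set X)), (∀ w ∈ W, IsWall w) →
    (W : Set (Set (Set X))).Pairwise WallTransv → W.card ≤ r

/-- `X` has finite rank. -/
def HasFiniteRank (X : Type u) [MetricSpace X] : Prop :=
  ∃ r : ℕ, RankLE X r

/-- The ℓ¹-product of a finite family of metric spaces (as a type synonym for the
dependent product, equipped with the ℓ¹ distance `d(x,y) = Σᵢ d(xᵢ,yᵢ)`). -/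
def L1Pi {ι : Type*} (X : ι → Type u) : Type _ := ∀ i, X i

noncomputable instance L1Pi.metricSpace {ι : Type*} [Fintype ι] (X : ι → Type u)
    [∀ i, MetricSpace (X i)] : MetricSpace (L1Pi X) where
  dist x y := ∑ i, dist (x i) (y i)
  dist_self x := by simp
  dist_comm x y := by simp [dist_comm]
  dist_triangle x y z := by
    calc ∑ i, dist (x i) (z i) ≤ ∑ i, (dist (x i) (y i) + dist (y i) (z i)) :=
          Finset.sum_le_sum fun i _ => dist_triangle _ _ _
      _ = _ := Finset.sum_add_distrib
  eq_of_dist_eq_zero := by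
    intro x y h
    funext i
    have h0 : ∀ j ∈ Finset.univ, dist (x j) (y j) = 0 :=
      (Finset.sum_eq_zero_iff_of_nonneg fun j _ => dist_nonneg).1 h
    exact dist_eq_zero.1 (h0 i (Finset.mem_univ i))

@[simp] lemma L1Pi.dist_eq {ι : Type*} [Fintype ι] (X : ι → Type u)
    [∀ i, MetricSpace (X i)] (x y : L1Pi X) :
    dist x y = ∑ i, dist (x i) (y i) := rfl

/-- A median space is irreducible if it is not isometric to an ℓ¹-product of two
median spaces, each containing at least two points. -/
def IsIrreducibleMS (X : Type u) [MetricSpace X] : Prop :=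
  ¬ ∃ (Y₁ Y₂ : Type u) (m₁ : MetricSpace Y₁) (m₂ : MetricSpace Y₂),
      haveI := m₁
      haveI := m₂
      IsMedianSpace Y₁ ∧ IsMedianSpace Y₂ ∧ Nontrivial Y₁ ∧ Nontrivial Y₂ ∧
        ∃ e : X ≃ Y₁ × Y₂, ∀ a b : X,
          dist a b = dist (e a).1 (e b).1 + dist (e a).2 (e b).2

lemma mem_mInterval_pi {k : ℕ} {X : Fin k → Type u} [∀ i, MetricSpace (X i)]
    {a b z : L1Pi X} (h : ∀ i, z i ∈ mInterval (a i) (b i)) : z ∈ mInterval a b := by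
  show dist a z + dist z b = dist a b
  simp only [L1Pi.dist_eq]
  rw [← Finset.sum_add_distrib]
  exact Finset.sum_congr rfl fun i _ => h i

lemma left_mem_mInterval {X : Type u} [MetricSpace X] (a b : X) : a ∈ mInterval a b := by
  simp [mInterval]

lemma right_mem_mInterval {X : Type u} [MetricSpace X] (a b : X) : b ∈ mInterval a b := by
  simp [mInterval]

/-- Replace one coordinate. -/
def L1Pi.upd {k : ℕ} {X : Fin k → Type u} (c : L1Pi X) (i : Fin k) (x : X i) : L1Pi X :=
  Function.update (β := X) c i x

lemma L1Pi.upd_same {k : ℕ} {X : Fin k → Type u} (c : L1Pi X) (i : Fin k) (x : X i) :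
    L1Pi.upd c i x i = x := Function.update_self (β := X) i x c

lemma L1Pi.upd_ne {k : ℕ} {X : Fin k → Type u} (c : L1Pi X) {i j : Fin k} (x : X i)
    (h : j ≠ i) : L1Pi.upd c i x j = c j := Function.update_of_ne (β := X) h x c

lemma L1Pi.upd_isometry {k : ℕ} {X : Fin k → Type u} [∀ i, MetricSpace (X i)]
    (c : L1Pi X) (i : Fin k) : Isometry (L1Pi.upd c i) := by
  refine Isometry.of_dist_eq fun x y => ?_
  rw [L1Pi.dist_eq, Finset.sum_eq_single i]
  · rw [L1Pi.upd_same, L1Pi.upd_same]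
  · intro j _ hj
    rw [L1Pi.upd_ne c x hj, L1Pi.upd_ne c y hj, dist_self]
  · simp

lemma upd_mem {k : ℕ} {X : Fin k → Type u} [∀ i, MetricSpace (X i)]
    {C : Set (L1Pi X)} (hC : MConvex C) {c w : L1Pi X} (hc : c ∈ C) (hw : w ∈ C) (i : Fin k) :
    L1Pi.upd c i (w i) ∈ C := by
  refine hC c hc w hw (mem_mInterval_pi fun j => ?_)
  by_cases h : j = i
  · subst h
    rw [L1Pi.upd_same]
    exact right_mem_mInterval _ _
  · rw [L1Pi.upd_ne c _ h]
    exact left_mem_mInterval _ _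

lemma image_eq_preimage_upd {k : ℕ} {X : Fin k → Type u} [∀ i, MetricSpace (X i)]
    {C : Set (L1Pi X)} (hC : MConvex C) {c : L1Pi X} (hc : c ∈ C) (i : Fin k) :
    (fun z : L1Pi X => z i) '' C = L1Pi.upd c i ⁻¹' C := by
  ext x
  constructor
  · rintro ⟨w, hw, rfl⟩
    exact upd_mem hC hc hw i
  · intro h
    exact ⟨_, h, L1Pi.upd_same c i x⟩

/-- Let `X₁, …, X_k` be irreducible, complete, finite-rank median
spaces and let `X` be their ℓ¹-product. Then every closed convex subset `C ⊆ X` is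
the product `C₁ × … × C_k`, where each `Cᵢ = pᵢ '' C` is a closed convex subset
of `Xᵢ`. -/
theorem closed_convex_subset_of_l1_product_is_product
    {k : ℕ} (hk : 0 < k) (X : Fin k → Type u) [∀ i, MetricSpace (X i)]
    [∀ i, CompleteSpace (X i)]
    (hmed : ∀ i, IsMedianSpace (X i))
    (hfr : ∀ i, HasFiniteRank (X i))
    (hirr : ∀ i, IsIrreducibleMS (X i))
    (C : Set (L1Pi X)) (hCcl : IsClosed C) (hCconv : MConvex C) :
    (∀ i, IsClosed ((fun z : L1Pi X => z i) '' C) ∧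
      MConvex ((fun z : L1Pi X => z i) '' C)) ∧
    C = {z : L1Pi X | ∀ i, z i ∈ (fun w : L1Pi X => w i) '' C} := by
  rcases C.eq_empty_or_nonempty with rfl | ⟨c, hc⟩
  · refine ⟨fun i => by simp [MConvex], ?_⟩
    ext z
    simp only [Set.image_empty, Set.mem_empty_iff_false, Set.mem_setOf_eq, false_iff]
    exact fun h => h ⟨0, hk⟩
  refine ⟨fun i => ?_, ?_⟩
  · rw [image_eq_preimage_upd hCconv hc i]
    refine ⟨hCcl.preimage (L1Pi.upd_isometry c i).continuous, ?_⟩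
    intro a ha b hb z hz
    refine hCconv _ ha _ hb ?_
    show _ + _ = _
    rw [(L1Pi.upd_isometry c i).dist_eq, (L1Pi.upd_isometry c i).dist_eq,
      (L1Pi.upd_isometry c i).dist_eq]
    exact hz
  · ext z
    refine ⟨fun hz i => ⟨z, hz, rfl⟩, fun hz => ?_⟩
    have key : ∀ s : Finset (Fin k), ∃ y ∈ C, ∀ i ∈ s, y i = z i := by
      intro s
      induction s using Finset.induction_on with
      | empty => exact ⟨c, hc, by simp⟩
      | insert i s _ ih =>
        obtain ⟨y, hy, hys⟩ := ih
        obtain ⟨w, hw, hwz⟩ := hz i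
        refine ⟨L1Pi.upd y i (w i), upd_mem hCconv hy hw i, fun j hj => ?_⟩
        by_cases h : j = i
        · subst h
          rw [L1Pi.upd_same]
          exact hwz
        · rw [L1Pi.upd_ne y _ h]
          exact hys j ((Finset.mem_insert.1 hj).resolve_left h)
    obtain ⟨y, hy, hyz⟩ := key Finset.univ
    have : y = z := funext fun i => hyz i (Finset.mem_univ i)
    exact this ▸ hy
end

section
/- Let X1,...,Xk be metric spaces and X their ℓ1-product with projections p_i. Fix points x_i, y_i ∈ X_i and ε > 0 with 2ε < d(x_i,y_i) for all i. Let x ∈ X be the point with coordinates (x_1,...,x_k), and for each i let z_i ∈ X be the point that agrees with x except that its i-th coordinate is y_i. If F is a surjective isometry of X satisfying d(F(x),x) < ε and d(F(z_i),z_i) < ε for all i, then there is no pair of indices i ≠ j admitting an isometry f : X_i → X_j with p_j ∘ F = f ∘ p_i. -/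
open Metric Filter Set

universe u

/-- In an ℓ¹-product `X = X₁ × … × X_k`, fix points `xᵢ, yᵢ ∈ Xᵢ`
and `ε > 0` with `2ε < d(xᵢ,yᵢ)` for all `i`.  Let `x` have coordinates `(xᵢ)` and
let `zᵢ` agree with `x` except that its `i`-th coordinate is `yᵢ`.  If `F` is a
surjective isometry of `X` with `d(F x, x) < ε` and `d(F zᵢ, zᵢ) < ε` for all `i`,
then no pair of distinct indices `i ≠ j` admits an isometry `f : Xᵢ → X_j` with
`p_j ∘ F = f ∘ pᵢ`. -/
theorem no_factor_swapping_isometry_close_to_id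
    {k : ℕ} (X : Fin k → Type u) [∀ i, MetricSpace (X i)]
    (x y : L1Pi X) (ε : ℝ) (hε : 0 < ε)
    (hsep : ∀ i, 2 * ε < dist (x i) (y i))
    (F : L1Pi X ≃ᵢ L1Pi X)
    (hFx : dist (F x) x < ε)
    (hFz : ∀ i, dist (F (Function.update x i (y i))) (Function.update x i (y i)) < ε) :
    ¬ ∃ (i j : Fin k), i ≠ j ∧ ∃ f : X i → X j, Isometry f ∧
      ∀ z : L1Pi X, (F z) j = f (z i) := by
  rintro ⟨i, j, hij, f, -, hf⟩
  have key : ∀ a b : L1Pi X, dist (a j) (b j) ≤ dist a b := fun a b =>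
    Finset.single_le_sum (f := fun l => dist (a l) (b l))
      (fun _ _ => dist_nonneg) (Finset.mem_univ j)
  have h1 := (key _ _).trans_lt hFx
  obtain ⟨z, hzi, hzj, hz⟩ : ∃ z : L1Pi X, z i = x i ∧ z j = y j ∧ dist (F z) z < ε :=
    ⟨_, Function.update_of_ne hij (y j) x, Function.update_self j (y j) x, hFz j⟩
  have h2 := (key _ _).trans_lt hz
  rw [hf] at h1 h2
  rw [hzi, hzj] at h2
  have h3 := dist_triangle_left (x j) (y j) (f (x i))
  linarith [hsep j]
end

section
/- Let X be a median space and let C1, C2 be gate-convex subsets with gate-projections π1, π2. Then the shores S1 := π1(C2) and S2 := π2(C1) coincide, respectively, with the set of first coordinates and the set of second coordinates of pairs of gates for (C1,C2); the restriction π2|_{S1} : S1 → S2 is a bijective isometry with inverse π1|_{S2}; and for every pair of gates (x1,x2) one has π1(I(x1,x2)) = {x1} and π2(I(x1,x2)) = {x2}, so that the union B := ⋃_{x1 ∈ S1} I(x1, π2(x1)) defining the bridge is a disjoint union. -/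
open Metric Filter Set

universe u

/-- `y` is a gate for `(x, C)`: `y ∈ C` and `y` lies between `x` and every point of `C`. -/
def IsGate {X : Type u} [MetricSpace X] (x : X) (C : Set X) (y : X) : Prop :=
  y ∈ C ∧ ∀ z ∈ C, y ∈ mInterval x z

/-- `C` is gate-convex: every point of `X` has a gate in `C`. -/
def GateConvex {X : Type u} [MetricSpace X] (C : Set X) : Prop :=
  ∀ x : X, ∃ y, IsGate x C y

/-- `(x₁, x₂)` is a pair of gates for `(C₁, C₂)`. -/
def IsGatePair {X : Type u} [MetricSpace X] (C₁ C₂ : Set X) (x₁ x₂ : X) : Prop :=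
  IsGate x₂ C₁ x₁ ∧ IsGate x₁ C₂ x₂

theorem gate_unique_aux {X : Type u} [MetricSpace X] {C : Set X} {x y z : X}
    (h : IsGate x C y) (h' : IsGate x C z) : y = z := by
  have h1 : dist x y + dist y z = dist x z := h.2 z h'.1
  have h2 : dist x z + dist z y = dist x y := h'.2 y h.1
  rw [dist_comm z y] at h2
  have := dist_nonneg (x := y) (y := z)
  exact dist_le_zero.1 (by linarith)

theorem gate_between_aux {X : Type u} [MetricSpace X] {C : Set X} {y x c : X}
    (h : IsGate y C x) (hc : c ∈ mInterval y x) : IsGate c C x := by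
  refine ⟨h.1, fun z hz => ?_⟩
  have h1 : dist y x + dist x z = dist y z := h.2 z hz
  have h2 : dist y c + dist c x = dist y x := hc
  have h3 := dist_triangle y c z
  have h4 := dist_triangle c x z
  show dist c x + dist x z = dist c z
  linarith

theorem mInterval_symm_aux {X : Type u} [MetricSpace X] {a b c : X}
    (h : c ∈ mInterval a b) : c ∈ mInterval b a := by
  have h1 : dist a c + dist c b = dist a b := h
  show dist b c + dist c a = dist b a
  rw [dist_comm b c, dist_comm c a, dist_comm b a]
  linarith

theorem gate_back_aux {X : Type u} [MetricSpace X] {C D : Set X} {y x x' : X}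
    (hy : y ∈ D) (h : IsGate y C x) (h' : IsGate x D x') : IsGate x' C x :=
  gate_between_aux h (mInterval_symm_aux (h'.2 y hy))

/-- For gate-convex subsets `C₁, C₂` of a median space with
gate-projections `π₁, π₂`: the shores `S₁ = π₁ '' C₂` and `S₂ = π₂ '' C₁`
coincide with the sets of first (resp. second) coordinates of pairs of gates;
`π₂` restricted to `S₁` is a bijective isometry onto `S₂` with inverse `π₁|_{S₂}`;
for every pair of gates `(x₁,x₂)` one has `π₁ '' I(x₁,x₂) = {x₁}` and
`π₂ '' I(x₁,x₂) = {x₂}`; and the union `B = ⋃_{x₁ ∈ S₁} I(x₁, π₂ x₁)` defining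
the bridge is a disjoint union. -/
theorem shores_and_bridge_decomposition
    {X : Type u} [MetricSpace X] (hX : IsMedianSpace X)
    (C₁ C₂ : Set X) (π₁ π₂ : X → X)
    (hπ₁ : ∀ x : X, IsGate x C₁ (π₁ x)) (hπ₂ : ∀ x : X, IsGate x C₂ (π₂ x)) :
    (π₁ '' C₂ = {x₁ : X | ∃ x₂ : X, IsGatePair C₁ C₂ x₁ x₂}) ∧
    (π₂ '' C₁ = {x₂ : X | ∃ x₁ : X, IsGatePair C₁ C₂ x₁ x₂}) ∧
    (π₂ '' (π₁ '' C₂) = π₂ '' C₁) ∧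
    (∀ a ∈ π₁ '' C₂, ∀ b ∈ π₁ '' C₂, dist (π₂ a) (π₂ b) = dist a b) ∧
    (∀ a ∈ π₁ '' C₂, π₁ (π₂ a) = a) ∧
    (∀ b ∈ π₂ '' C₁, π₂ (π₁ b) = b) ∧
    (∀ x₁ x₂ : X, IsGatePair C₁ C₂ x₁ x₂ →
      π₁ '' mInterval x₁ x₂ = {x₁} ∧ π₂ '' mInterval x₁ x₂ = {x₂}) ∧
    (∀ a ∈ π₁ '' C₂, ∀ b ∈ π₁ '' C₂, a ≠ b →
      Disjoint (mInterval a (π₂ a)) (mInterval b (π₂ b))) := by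
  have p1 : ∀ a ∈ π₁ '' C₂, IsGatePair C₁ C₂ a (π₂ a) := by
    rintro _ ⟨y, hy, rfl⟩
    exact ⟨gate_back_aux hy (hπ₁ y) (hπ₂ _), hπ₂ _⟩
  have p2 : ∀ b ∈ π₂ '' C₁, IsGatePair C₁ C₂ (π₁ b) b := by
    rintro _ ⟨y, hy, rfl⟩
    exact ⟨hπ₁ _, gate_back_aux hy (hπ₂ y) (hπ₁ _)⟩
  have q1 : ∀ x₁ x₂, IsGatePair C₁ C₂ x₁ x₂ → π₁ x₂ = x₁ := fun x₁ x₂ h =>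
    gate_unique_aux (hπ₁ x₂) h.1
  have q2 : ∀ x₁ x₂, IsGatePair C₁ C₂ x₁ x₂ → π₂ x₁ = x₂ := fun x₁ x₂ h =>
    gate_unique_aux (hπ₂ x₁) h.2
  have r1 : ∀ x₁ x₂, IsGatePair C₁ C₂ x₁ x₂ → ∀ c ∈ mInterval x₁ x₂, π₁ c = x₁ :=
    fun x₁ x₂ h c hc =>
      gate_unique_aux (hπ₁ c) (gate_between_aux h.1 (mInterval_symm_aux hc))
  have r2 : ∀ x₁ x₂, IsGatePair C₁ C₂ x₁ x₂ → ∀ c ∈ mInterval x₁ x₂, π₂ c = x₂ :=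
    fun x₁ x₂ h c hc => gate_unique_aux (hπ₂ c) (gate_between_aux h.2 hc)
  refine ⟨?_, ?_, ?_, ?_, fun a ha => q1 _ _ (p1 a ha), fun b hb => q2 _ _ (p2 b hb), ?_, ?_⟩
  · ext a
    exact ⟨fun ha => ⟨_, p1 a ha⟩, fun ⟨b, h⟩ => ⟨b, h.2.1, q1 _ _ h⟩⟩
  · ext b
    exact ⟨fun hb => ⟨_, p2 b hb⟩, fun ⟨a, h⟩ => ⟨a, h.1.1, q2 _ _ h⟩⟩
  · ext b
    constructor
    · rintro ⟨a, ha, rfl⟩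
      exact ⟨a, (p1 a ha).1.1, rfl⟩
    · intro hb
      have h := p2 b hb
      exact ⟨π₁ b, ⟨b, h.2.1, rfl⟩, q2 _ _ h⟩
  · intro a ha b hb
    have ga := p1 a ha
    have gb := p1 b hb
    have h1 : dist a (π₂ a) + dist (π₂ a) (π₂ b) = dist a (π₂ b) := ga.2.2 _ gb.2.1
    have h2 : dist (π₂ a) a + dist a b = dist (π₂ a) b := ga.1.2 _ gb.1.1
    have h3 : dist b (π₂ b) + dist (π₂ b) (π₂ a) = dist b (π₂ a) := gb.2.2 _ ga.2.1
    have h4 : dist (π₂ b) b + dist b a = dist (π₂ b) a := gb.1.2 _ ga.1.1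
    rw [dist_comm (π₂ a) a, dist_comm (π₂ a) b] at h2
    rw [dist_comm (π₂ b) (π₂ a)] at h3
    rw [dist_comm (π₂ b) b, dist_comm b a, dist_comm (π₂ b) a] at h4
    linarith
  · intro x₁ x₂ h
    have hl : x₁ ∈ mInterval x₁ x₂ := by simp [mInterval]
    constructor
    · ext c
      constructor
      · rintro ⟨d, hd, rfl⟩
        exact r1 _ _ h d hd
      · rintro rfl
        exact ⟨_, hl, r1 _ _ h _ hl⟩
    · ext c
      constructor
      · rintro ⟨d, hd, rfl⟩
        exact r2 _ _ h d hd
      · rintro rfl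
        exact ⟨_, hl, r2 _ _ h _ hl⟩
  · intro a ha b hb hab
    rw [Set.disjoint_left]
    intro c hca hcb
    exact hab ((r1 _ _ (p1 a ha) c hca).symm.trans (r1 _ _ (p1 b hb) c hcb))
end

section
/- Let X be a median space, C1, C2 gate-convex subsets with gate-projections π1, π2, S1 := π1(C2), and B := ⋃_{x1 ∈ S1} I(x1, π2(x1)) the bridge. Then for any pair of gates (x1,x2) for (C1,C2), the map sending b ∈ B to (π_{S1}(b), m(b,x1,x2)) is a bijective isometry from B onto the ℓ1-product S1 × I(x1,x2) (here S1 is gate-convex with gate-projection π_{S1}, and m(·,x1,x2) is the gate-projection to the interval I(x1,x2)). -/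
open Metric Filter Set

universe u

section Helpers
variable {X : Type u} [MetricSpace X]

theorem gate_unique {x : X} {C : Set X} {y y' : X} (h : IsGate x C y) (h' : IsGate x C y') :
    y = y' := by
  have h1 : dist x y + dist y y' = dist x y' := h.2 _ h'.1
  have h2 : dist x y' + dist y' y = dist x y := h'.2 _ h.1
  rw [dist_comm y' y] at h2
  exact dist_le_zero.1 (by linarith)

theorem median_gate (hX : IsMedianSpace X) {x b c m z : X} (hm : IsMedianPoint x b c m)
    (hz : z ∈ mInterval b c) : m ∈ mInterval x z := by
  obtain ⟨u, ⟨u1, u2, u3⟩, -⟩ := hX x z m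
  obtain ⟨p, ⟨p1, p2, p3⟩, -⟩ := hX u z b
  obtain ⟨q, ⟨q1, q2, q3⟩, -⟩ := hX u p c
  obtain ⟨m1, m2, m3⟩ := hm
  simp only [mInterval, Set.mem_setOf_eq] at *
  have hmu : IsMedianPoint u b c m := by
    refine ⟨?_, m2, ?_⟩ <;> simp only [mInterval, Set.mem_setOf_eq]
    · linarith [dist_triangle x u b, dist_triangle u m b]
    · linarith [dist_triangle x u c, dist_triangle u m c]
  have hp : dist b p + dist p c = dist b c := by
    linarith [dist_triangle b p c, dist_triangle p z c, dist_comm b p, dist_comm b z,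
      dist_comm p z]
  have hq : IsMedianPoint u b c q := by
    refine ⟨?_, ?_, q3⟩ <;> simp only [mInterval, Set.mem_setOf_eq]
    · linarith [dist_triangle u q b, dist_triangle q p b]
    · linarith [dist_triangle b q c, dist_triangle b p q]
  have hqm : q = m := (hX u b c).unique hq hmu
  subst hqm
  have h0 : dist u q = 0 := by
    have hpq : dist p u + dist u q = dist p q := by
      linarith [dist_triangle p u q, dist_triangle z p q, dist_comm p u, dist_comm p z,
        dist_comm u z]
    have := dist_nonneg (x := u) (y := q)
    linarith [dist_comm p u, dist_comm p q]
  have := dist_eq_zero.1 h0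
  subst this
  exact u1

theorem gate_convex {S : Set X} (h : ∀ x : X, ∃ y, IsGate x S y) {a e m : X} (ha : a ∈ S)
    (he : e ∈ S) (hm : m ∈ mInterval a e) : m ∈ S := by
  obtain ⟨g, hg, hg'⟩ := h m
  have h1 := hg' a ha
  have h2 := hg' e he
  simp only [mInterval, Set.mem_setOf_eq] at *
  have h0 : dist m g ≤ 0 := by
    linarith [dist_triangle a g e, dist_comm a m, dist_comm a g]
  rw [dist_le_zero.1 h0]; exact hg

theorem fib_core (hX : IsMedianSpace X) {S : Set X} {σ : X → X} {L : ℝ}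
    (hL : ∀ a ∈ S, dist a (σ a) = L)
    (hD : ∀ a ∈ S, ∀ e ∈ S, dist a (σ e) = L + dist a e)
    (hσ : ∀ a ∈ S, ∀ e ∈ S, dist (σ a) (σ e) = dist a e)
    {f : X → X → X} (hf : ∀ e p, IsMedianPoint p e (σ e) (f e p))
    {a e p : X} (ha : a ∈ S) (he : e ∈ S) (hp : p ∈ mInterval a (σ a)) :
    dist p e = dist p a + dist a e ∧ f e p ∈ mInterval e (σ e) ∧
    dist p (f e p) = dist a e ∧ dist e (f e p) = dist a p ∧
    ∀ z ∈ mInterval e (σ e), dist p z = dist a e + dist (f e p) z := by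
  have hg := fun z hz => median_gate hX (z := z) (hf e p) hz
  obtain ⟨f1, f2, f3⟩ := hf e p
  have e1 := hL a ha
  have e2 := hL e he
  have e3 := hD a ha e he
  have e4 := hD e he a ha
  have e5 := hσ a ha e he
  simp only [mInterval, Set.mem_setOf_eq] at *
  have h1 : dist p e = dist p a + dist a e := by
    linarith [dist_triangle e p (σ a), dist_triangle p a e, dist_comm e p, dist_comm a p,
      dist_comm a e]
  have h2 : dist p (σ e) = dist p (σ a) + dist a e := by
    linarith [dist_triangle a p (σ e), dist_triangle p (σ a) (σ e)]
  have h3 : dist p (f e p) = dist a e := by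
    linarith [dist_comm e (f e p), dist_comm a p]
  refine ⟨h1, f2, h3, ?_, ?_⟩
  · linarith [dist_comm e (f e p), dist_comm a p]
  · intro z hz
    linarith [hg z hz]

end Helpers

/-- Let `C₁, C₂` be gate-convex subsets of a median space with
gate-projections `π₁, π₂`, `S₁ = π₁ '' C₂`, and let
`B = ⋃_{x₁ ∈ S₁} I(x₁, π₂ x₁)` be the bridge.  For any pair of gates `(x₁,x₂)`,
the map `b ↦ (π_{S₁} b, m(b,x₁,x₂))` is a bijective isometry from `B` onto the
ℓ¹-product `S₁ × I(x₁,x₂)`; here `π_{S₁}` is the gate-projection to `S₁` and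
`m(·,x₁,x₂)` is the gate-projection to the interval `I(x₁,x₂)`. -/
theorem bridge_is_l1_product_of_shore_and_interval
    {X : Type u} [MetricSpace X] (hX : IsMedianSpace X)
    (C₁ C₂ : Set X) (π₁ π₂ : X → X)
    (hπ₁ : ∀ x : X, IsGate x C₁ (π₁ x)) (hπ₂ : ∀ x : X, IsGate x C₂ (π₂ x))
    (B : Set X) (hB : B = ⋃ a ∈ π₁ '' C₂, mInterval a (π₂ a))
    (x₁ x₂ : X) (hpair : IsGatePair C₁ C₂ x₁ x₂)
    (πS : X → X) (hπS : ∀ x : X, IsGate x (π₁ '' C₂) (πS x))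
    (med : X → X) (hmed : ∀ b : X, IsMedianPoint b x₁ x₂ (med b)) :
    (∀ b ∈ B, πS b ∈ π₁ '' C₂ ∧ med b ∈ mInterval x₁ x₂) ∧
    (∀ b ∈ B, ∀ b' ∈ B, πS b = πS b' → med b = med b' → b = b') ∧
    (∀ s ∈ π₁ '' C₂, ∀ t ∈ mInterval x₁ x₂, ∃ b ∈ B, πS b = s ∧ med b = t) ∧
    (∀ b ∈ B, ∀ b' ∈ B,
      dist b b' = dist (πS b) (πS b') + dist (med b) (med b')) := by
  have hret : ∀ a ∈ π₁ '' C₂, π₁ (π₂ a) = a := by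
    rintro _ ⟨c, hc, rfl⟩
    have h1 := (hπ₂ (π₁ c)).2 c hc
    have h2 := (hπ₁ c).2 _ (hπ₁ (π₂ (π₁ c))).1
    have h3 := (hπ₁ (π₂ (π₁ c))).2 _ (hπ₁ c).1
    simp only [mInterval, Set.mem_setOf_eq] at h1 h2 h3
    refine dist_le_zero.1 ?_
    have t := dist_triangle c (π₂ (π₁ c)) (π₁ (π₂ (π₁ c)))
    rw [dist_comm (π₁ c) (π₂ (π₁ c)), dist_comm (π₂ (π₁ c)) c] at h1
    rw [dist_comm (π₁ c) (π₁ (π₂ (π₁ c)))] at h2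
    rw [dist_comm (π₁ c) c] at h1
    linarith [dist_nonneg (x := π₁ (π₂ (π₁ c))) (y := π₁ c)]
  have hx2 : π₂ x₁ = x₂ := gate_unique (hπ₂ x₁) hpair.2
  have hx1 : x₁ ∈ π₁ '' C₂ := ⟨x₂, hpair.2.1, gate_unique (hπ₁ x₂) hpair.1⟩
  have hC : ∀ a ∈ π₁ '' C₂, a ∈ C₁ := by
    rintro _ ⟨c, hc, rfl⟩
    exact (hπ₁ c).1
  have hA : ∀ a ∈ π₁ '' C₂, ∀ e ∈ π₁ '' C₂, dist a (π₂ a) = dist e (π₂ e) ∧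
      dist a (π₂ e) = dist e (π₂ e) + dist a e ∧ dist (π₂ a) (π₂ e) = dist a e := by
    intro a ha e he
    have h1 := (hπ₂ a).2 _ (hπ₂ e).1
    have h2 := (hπ₂ e).2 _ (hπ₂ a).1
    have h3 := (hπ₁ (π₂ a)).2 _ (hC e he)
    have h4 := (hπ₁ (π₂ e)).2 _ (hC a ha)
    rw [hret a ha] at h3
    rw [hret e he] at h4
    simp only [mInterval, Set.mem_setOf_eq] at h1 h2 h3 h4
    have c1 := dist_comm a e
    have c2 := dist_comm (π₂ a) (π₂ e)
    have c3 := dist_comm a (π₂ e)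
    have c4 := dist_comm e (π₂ a)
    have c5 := dist_comm a (π₂ a)
    have c6 := dist_comm e (π₂ e)
    refine ⟨?_, ?_, ?_⟩ <;> linarith
  generalize hS : π₁ '' C₂ = S at *
  have hf' : ∀ e p : X, ∃ w, IsMedianPoint p e (π₂ e) w := fun e p => (hX p e (π₂ e)).exists
  choose f hf using hf'
  have core := fun {a e p : X} (ha : a ∈ S) (he : e ∈ S) (hp : p ∈ mInterval a (π₂ a)) =>
    fib_core hX (S := S) (σ := π₂) (L := dist x₁ (π₂ x₁)) (fun a ha => (hA a ha x₁ hx1).1)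
      (fun a ha e he => by rw [(hA a ha e he).2.1, (hA e he x₁ hx1).1])
      (fun a ha e he => (hA a ha e he).2.2) hf ha he hp
  have inv : ∀ a ∈ S, ∀ e ∈ S, ∀ p ∈ mInterval a (π₂ a), f a (f e p) = p := by
    intro a ha e he p hp
    obtain ⟨-, k1, k2, -, -⟩ := core ha he hp
    have k3 := (core he ha k1).2.2.2.2 p hp
    refine dist_le_zero.1 ?_
    linarith [dist_comm p (f e p), dist_comm a e]
  have comp0 : ∀ a ∈ S, ∀ e ∈ S, ∀ x ∈ S, e ∈ mInterval a x → ∀ p ∈ mInterval a (π₂ a),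
      f x (f e p) = f x p := by
    intro a ha e he x hx hex p hp
    obtain ⟨-, k1, k2, -, -⟩ := core ha he hp
    obtain ⟨-, l1, l2, -, -⟩ := core he hx k1
    have k3 := (core ha hx hp).2.2.2.2 _ l1
    simp only [mInterval, Set.mem_setOf_eq] at hex
    refine (dist_le_zero.1 ?_).symm
    linarith [dist_triangle p (f e p) (f x (f e p))]
  have comp : ∀ a ∈ S, ∀ e ∈ S, ∀ x ∈ S, ∀ p ∈ mInterval a (π₂ a),
      f x (f e p) = f x p := by
    intro a ha e he x hx p hp
    obtain ⟨m, ⟨m1, m2, m3⟩, -⟩ := hX a e x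
    have hm : m ∈ S := gate_convex (fun x => ⟨_, hπS x⟩) ha he m1
    have k := (core ha hm hp).2.1
    have l := (core ha he hp).2.1
    rw [← comp0 a ha m hm x hx m3 p hp, ← comp0 e he m hm x hx m2 _ l,
      ← comp0 a ha m hm e he m1 p hp, inv m hm e he _ k]
  have iso : ∀ a ∈ S, ∀ e ∈ S, ∀ p ∈ mInterval a (π₂ a), ∀ q ∈ mInterval a (π₂ a),
      dist (f e p) (f e q) = dist p q := by
    intro a ha e he p hp q hq
    have k1 := (core ha he hq).2.1
    have k2 := (core ha he hp).2.2.2.2 _ k1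
    have k3 := (core he ha k1).2.2.2.2 _ hp
    rw [inv a ha e he q hq] at k3
    linarith [dist_comm p (f e q), dist_comm a e, dist_comm p q]
  have hmedf : ∀ b, med b = f x₁ b := by
    intro b
    have h := hf x₁ b
    rw [hx2] at h
    exact (hX b x₁ x₂).unique (hmed b) h
  have hπSa : ∀ a ∈ S, ∀ p ∈ mInterval a (π₂ a), πS p = a := by
    intro a ha p hp
    refine gate_unique (hπS p) ⟨ha, fun e he => ?_⟩
    exact ((core ha he hp).1).symm
  have hBm : ∀ b, b ∈ B ↔ ∃ a ∈ S, b ∈ mInterval a (π₂ a) := by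
    intro b
    rw [hB]
    simp only [Set.mem_iUnion, exists_prop]
  have main : ∀ b ∈ B, ∀ b' ∈ B,
      dist b b' = dist (πS b) (πS b') + dist (med b) (med b') := by
    intro b hb c hc
    obtain ⟨a, ha, hb⟩ := (hBm b).1 hb
    obtain ⟨e, he, hc⟩ := (hBm c).1 hc
    rw [hπSa a ha b hb, hπSa e he c hc, hmedf, hmedf]
    obtain ⟨-, k1, -, -, k2⟩ := core ha he hb
    rw [k2 c hc, ← comp a ha e he x₁ hx1 b hb, iso e he x₁ hx1 _ k1 _ hc]
  refine ⟨fun b _ => ⟨(hπS b).1, (hmed b).2.1⟩, ?_, ?_, main⟩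
  · intro b hb c hc h1 h2
    have h := main b hb c hc
    rw [h1, h2, dist_self, dist_self, add_zero] at h
    exact dist_eq_zero.1 h
  · intro s hs t ht
    rw [← hx2] at ht
    have k := (core hx1 hs ht).2.1
    refine ⟨f s t, (hBm _).2 ⟨s, hs, k⟩, hπSa s hs _ k, ?_⟩
    rw [hmedf]
    exact inv x₁ hx1 s hs t ht
end

section
/- Let X be a median space of rank at most r and let σ1, σ2 be ultrafilters on the set 𝓗(X) of halfspaces. (1) If σ1 \ σ2 is nonempty, it can be decomposed as a disjoint union C1 ⊔ ... ⊔ Ck with k ≤ r, where each C_i is nonempty and totally ordered by inclusion. (2) Every infinite subset of σ1 \ σ2 contains an infinite subset that is totally ordered by inclusion. -/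
open Metric Filter Set

universe u

/-- An ultrafilter on the set of halfspaces of `X`: a set of halfspaces, any two
of which intersect, containing exactly one of `h, hᶜ` for every halfspace `h`. -/
def UltrafilterOn (X : Type u) [MetricSpace X] (σ : Set (Set X)) : Prop :=
  (∀ h ∈ σ, IsHalfspace h) ∧
  (∀ h ∈ σ, ∀ k ∈ σ, (h ∩ k).Nonempty) ∧
  ∀ h : Set X, IsHalfspace h → ((h ∈ σ ∧ hᶜ ∉ σ) ∨ (hᶜ ∈ σ ∧ h ∉ σ))

/-- The principal ultrafilter of halfspaces containing the point `x`. -/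
def sigmaPt {X : Type u} [MetricSpace X] (x : X) : Set (Set X) :=
  {h : Set X | IsHalfspace h ∧ x ∈ h}

theorem dilworth_fin {α : Type*} [PartialOrder α] : ∀ (n : ℕ) (s : Finset α) (r : ℕ),
    s.card ≤ n →
    (∀ t : Finset α, t ⊆ s → IsAntichain (· ≤ ·) (t : Set α) → t.card ≤ r) →
    ∃ f : α → ℕ, (∀ x ∈ s, f x < r) ∧ ∀ x ∈ s, ∀ y ∈ s, f x = f y → x ≤ y ∨ y ≤ x := by
  classical
  intro n
  induction n with
  | zero =>
    intro s r hs _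
    have : s = ∅ := Finset.card_eq_zero.mp (by omega)
    subst this
    exact ⟨fun _ => 0, by simp, by simp⟩
  | succ n ih =>
    intro s r hs hanti
    rcases s.eq_empty_or_nonempty with rfl | hne
    · exact ⟨fun _ => 0, by simp, by simp⟩
    obtain ⟨a, has, hamax⟩ := s.exists_maximal hne
    have hr1 : 1 ≤ r := by
      simpa using hanti {a} (by simpa using has) (by simp)
    -- extension by one chain
    have key : ∀ K : Finset α, K ⊆ s → a ∈ K → (∀ x ∈ K, ∀ y ∈ K, x ≤ y ∨ y ≤ x) →
        (∀ t : Finset α, t ⊆ s \ K → IsAntichain (· ≤ ·) (t : Set α) → t.card ≤ r - 1) →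
        ∃ f : α → ℕ, (∀ x ∈ s, f x < r) ∧
          ∀ x ∈ s, ∀ y ∈ s, f x = f y → x ≤ y ∨ y ≤ x := by
      intro K hK haK hch hw
      have hc : (s \ K).card ≤ n := by
        have h1 := Finset.card_sdiff_add_card_eq_card hK
        have h2 : 0 < K.card := Finset.card_pos.mpr ⟨a, haK⟩
        omega
      obtain ⟨g, hg1, hg2⟩ := ih (s \ K) (r - 1) hc hw
      refine ⟨fun x => if x ∈ K then r - 1 else g x, ?_, ?_⟩
      · intro x hx
        by_cases hxK : x ∈ K
        · simp only [hxK, if_true]; omega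
        · have := hg1 x (by simp [hx, hxK])
          simp only [hxK, if_false]; omega
      · intro x hx y hy
        by_cases hxK : x ∈ K <;> by_cases hyK : y ∈ K
        · intro _; exact hch x hxK y hyK
        · have := hg1 y (by simp [hy, hyK])
          simp only [hxK, hyK, if_true, if_false]; omega
        · have := hg1 x (by simp [hx, hxK])
          simp only [hxK, hyK, if_true, if_false]; omega
        · simp only [hxK, hyK, if_false]
          exact hg2 x (by simp [hx, hxK]) y (by simp [hy, hyK])
    by_cases hsmall : ∀ t : Finset α, t ⊆ s \ {a} → IsAntichain (· ≤ ·) (t : Set α) →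
        t.card ≤ r - 1
    · exact key {a} (by simpa using has) (by simp) (by simp) hsmall
    push Not at hsmall
    obtain ⟨t₀, ht₀s, ht₀a, ht₀c⟩ := hsmall
    have hc' : (s \ {a}).card ≤ n := by
      have h1 := Finset.card_sdiff_add_card_eq_card (s := {a}) (t := s) (by simpa using has)
      simp only [Finset.card_singleton] at h1
      omega
    obtain ⟨f, hf1, hf2⟩ := ih (s \ {a}) r hc'
      (fun t ht => hanti t (ht.trans Finset.sdiff_subset))
    have surj : ∀ t : Finset α, t ⊆ s \ {a} → IsAntichain (· ≤ ·) (t : Set α) → r ≤ t.card →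
        ∀ i < r, ∃ y ∈ t, f y = i := by
      intro t ht hta htc i hi
      have himg : t.image f = Finset.range r := by
        apply Finset.eq_of_subset_of_card_le
        · intro j hj
          obtain ⟨y, hy, rfl⟩ := Finset.mem_image.mp hj
          exact Finset.mem_range.mpr (hf1 y (ht hy))
        · rw [Finset.card_range, Finset.card_image_of_injOn]
          · exact htc
          · intro x hx y hy hxy
            rcases hf2 x (ht hx) y (ht hy) hxy with h | h
            · exact hta.eq hx hy h
            · exact (hta.eq hy hx h).symm
      have : i ∈ t.image f := by rw [himg]; exact Finset.mem_range.mpr hi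
      simpa using this
    let Q : α → Prop := fun x => ∃ t : Finset α, t ⊆ s \ {a} ∧
      IsAntichain (· ≤ ·) (t : Set α) ∧ r ≤ t.card ∧ x ∈ t
    have hx : ∀ i : Fin r, ∃ x, x ∈ s \ {a} ∧ f x = i ∧ Q x ∧
        ∀ y ∈ s \ {a}, f y = i → Q y → y ≤ x := by
      intro i
      have hne' : ((s \ {a}).filter (fun x => f x = i ∧ Q x)).Nonempty := by
        obtain ⟨y, hy, hyi⟩ := surj t₀ ht₀s ht₀a (by omega) i i.2
        exact ⟨y, Finset.mem_filter.mpr ⟨ht₀s hy, hyi, t₀, ht₀s, ht₀a, by omega, hy⟩⟩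
      obtain ⟨x, hxm, hxmax⟩ := Finset.exists_maximal hne'
      obtain ⟨hxs, hxi, hxQ⟩ := Finset.mem_filter.mp hxm
      refine ⟨x, hxs, hxi, hxQ, fun y hy hyi hyQ => ?_⟩
      rcases hf2 x hxs y hy (hxi.trans hyi.symm) with h | h
      · exact hxmax (Finset.mem_filter.mpr ⟨hy, hyi, hyQ⟩) h
      · exact h
    choose x hxs hxi hxQ hxmax using hx
    have hxanti : ∀ i j, x i ≤ x j → i = j := by
      intro i j hij
      obtain ⟨t, hts, hta, htc, hxt⟩ := hxQ j
      obtain ⟨y, hy, hyi⟩ := surj t hts hta htc i i.2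
      have h1 := hxmax i y (hts hy) hyi ⟨t, hts, hta, htc, hy⟩
      have h2 : y = x j := hta.eq hy hxt (h1.trans hij)
      apply Fin.ext
      rw [← hyi, h2, hxi]
    have hlt : ∃ i, x i ≤ a := by
      by_contra hcon
      push Not at hcon
      have hnot : a ∉ Finset.univ.image x := by
        intro h
        obtain ⟨i, _, hi⟩ := Finset.mem_image.mp h
        exact hcon i hi.le
      have hcard := hanti (insert a (Finset.univ.image x)) (by
        intro z hz
        rcases Finset.mem_insert.mp hz with rfl | hz
        · exact has
        · obtain ⟨i, _, rfl⟩ := Finset.mem_image.mp hz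
          exact (Finset.mem_sdiff.mp (hxs i)).1) (by
        intro u hu v hv huv hle
        rcases Finset.mem_insert.mp hu with rfl | hu2 <;>
          rcases Finset.mem_insert.mp hv with rfl | hv2
        · exact huv rfl
        · obtain ⟨i, _, rfl⟩ := Finset.mem_image.mp hv2
          exact hcon i (hamax (Finset.mem_sdiff.mp (hxs i)).1 hle)
        · obtain ⟨i, _, rfl⟩ := Finset.mem_image.mp hu2
          exact hcon i hle
        · obtain ⟨i, _, rfl⟩ := Finset.mem_image.mp hu2
          obtain ⟨j, _, rfl⟩ := Finset.mem_image.mp hv2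
          exact huv (congrArg x (hxanti i j hle)))
      rw [Finset.card_insert_of_notMem hnot, Finset.card_image_of_injective _
        (fun i j h => hxanti i j h.le)] at hcard
      simp at hcard
    obtain ⟨i, hia⟩ := hlt
    refine key (insert a ((s \ {a}).filter (fun z => f z = i ∧ z ≤ x i))) ?_ (by simp) ?_ ?_
    · intro z hz
      rcases Finset.mem_insert.mp hz with rfl | hz
      · exact has
      · exact (Finset.mem_sdiff.mp (Finset.mem_filter.mp hz).1).1
    · intro u hu v hv
      rcases Finset.mem_insert.mp hu with rfl | hu <;>
        rcases Finset.mem_insert.mp hv with rfl | hv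
      · exact Or.inl le_rfl
      · exact Or.inr ((Finset.mem_filter.mp hv).2.2.trans hia)
      · exact Or.inl ((Finset.mem_filter.mp hu).2.2.trans hia)
      · obtain ⟨hu1, hu2, _⟩ := Finset.mem_filter.mp hu
        obtain ⟨hv1, hv2, _⟩ := Finset.mem_filter.mp hv
        exact hf2 u hu1 v hv1 (hu2.trans hv2.symm)
    · intro t ht hta
      by_contra hcon
      have hts : t ⊆ s \ {a} := ht.trans (Finset.sdiff_subset_sdiff le_rfl (by simp))
      obtain ⟨y, hy, hyi⟩ := surj t hts hta (by omega) i i.2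
      have h1 := hxmax i y (hts hy) hyi ⟨t, hts, hta, by omega, hy⟩
      exact (Finset.mem_sdiff.mp (ht hy)).2
        (Finset.mem_insert_of_mem (Finset.mem_filter.mpr ⟨hts hy, hyi, h1⟩))

theorem dilworth_inf {α : Type*} [PartialOrder α] (D : Set α) (r : ℕ)
    (h : ∀ t : Finset α, (t : Set α) ⊆ D → IsAntichain (· ≤ ·) (t : Set α) → t.card ≤ r) :
    ∃ f : α → ℕ, (∀ x ∈ D, f x < r) ∧ ∀ x ∈ D, ∀ y ∈ D, f x = f y → x ≤ y ∨ y ≤ x := by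
  classical
  have hfin : ∀ s : Finset α, ∃ f : α → ℕ, (∀ x ∈ s.filter (· ∈ D), f x < r) ∧
      ∀ x ∈ s.filter (· ∈ D), ∀ y ∈ s.filter (· ∈ D), f x = f y → x ≤ y ∨ y ≤ x := by
    intro s
    refine dilworth_fin _ _ r le_rfl (fun t ht => h t ?_)
    intro z hz
    exact (Finset.mem_filter.mp (ht hz)).2
  choose F hF1 hF2 using hfin
  let U : Ultrafilter (Finset α) := Ultrafilter.of Filter.atTop
  have hU : ∀ x : α, ∀ᶠ s in (U : Filter (Finset α)), x ∈ s := by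
    intro x
    apply Ultrafilter.of_le Filter.atTop
    filter_upwards [Filter.eventually_ge_atTop ({x} : Finset α)] with s hs
    exact hs (by simp)
  have hcol : ∀ x : α, ∃ c : ℕ, x ∈ D → c < r ∧ ∀ᶠ s in (U : Filter (Finset α)), F s x = c := by
    intro x
    by_cases hx : x ∈ D
    · have h1 : ∀ᶠ s in (U : Filter (Finset α)), ∃ c ∈ Set.Iio r, F s x = c := by
        filter_upwards [hU x] with s hs
        exact ⟨_, hF1 s x (by simp [hs, hx]), rfl⟩
      obtain ⟨c, hc, hc'⟩ := (Ultrafilter.eventually_exists_mem_iff (Set.finite_Iio r)).mp h1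
      exact ⟨c, fun _ => ⟨hc, hc'⟩⟩
    · exact ⟨0, fun h => absurd h hx⟩
  choose f hf using hcol
  refine ⟨f, fun x hx => (hf x hx).1, fun x hx y hy hxy => ?_⟩
  obtain ⟨s, h1, h2, h3, h4⟩ := ((hU x).and ((hU y).and ((hf x hx).2.and (hf y hy).2))).exists
  exact hF2 s x (by simp [h1, hx]) y (by simp [h2, hy]) (by rw [h3, h4, hxy])

/-- Let `X` be a median space of rank at most `r` and `σ₁, σ₂`
ultrafilters on the halfspaces of `X`.  (1) If `σ₁ \ σ₂` is nonempty, it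
decomposes as a disjoint union of `k ≤ r` nonempty subsets, each totally ordered
by inclusion.  (2) Every infinite subset of `σ₁ \ σ₂` contains an infinite subset
totally ordered by inclusion. -/
theorem ultrafilter_difference_decomposes_into_chains
    {X : Type u} [MetricSpace X] (hX : IsMedianSpace X)
    (r : ℕ) (hr : RankLE X r)
    (σ₁ σ₂ : Set (Set X)) (hσ₁ : UltrafilterOn X σ₁) (hσ₂ : UltrafilterOn X σ₂) :
    ((σ₁ \ σ₂).Nonempty →
      ∃ (k : ℕ), k ≤ r ∧ ∃ C : Fin k → Set (Set X),
        (∀ i, (C i).Nonempty) ∧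
        (Set.univ : Set (Fin k)).PairwiseDisjoint C ∧
        (⋃ i, C i) = σ₁ \ σ₂ ∧
        ∀ i, IsChain (· ⊆ ·) (C i)) ∧
    ∀ S : Set (Set X), S ⊆ σ₁ \ σ₂ → S.Infinite →
      ∃ T : Set (Set X), T ⊆ S ∧ T.Infinite ∧ IsChain (· ⊆ ·) T := by
  classical
  have hanti : ∀ t : Finset (Set X), (t : Set (Set X)) ⊆ σ₁ \ σ₂ →
      IsAntichain (· ≤ ·) (t : Set (Set X)) → t.card ≤ r := by
    intro t ht hta
    have hinj : Set.InjOn (fun h : Set X => ({h, hᶜ} : Set (Set X))) t := by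
      intro h hh k hk hhk
      have hk' : h ∈ ({k, kᶜ} : Set (Set X)) := by
        rw [← show ({h, hᶜ} : Set (Set X)) = {k, kᶜ} from hhk]; simp
      rcases hk' with rfl | hk'
      · rfl
      · obtain ⟨z, hz1, hz2⟩ := hσ₁.2.1 h (ht hh).1 k (ht hk).1
        have hk'' : h = kᶜ := hk'
        rw [hk''] at hz1
        exact absurd hz2 hz1
    rw [← Finset.card_image_of_injOn hinj]
    apply hr
    · intro w hw
      obtain ⟨h, hh, rfl⟩ := Finset.mem_image.mp hw
      exact ⟨h, hσ₁.1 h (ht hh).1, rfl⟩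
    · intro w hw w' hw' hne
      obtain ⟨h, hh, rfl⟩ := Finset.mem_image.mp hw
      obtain ⟨k, hk, rfl⟩ := Finset.mem_image.mp hw'
      have hhk : h ≠ k := fun e => hne (by rw [e])
      have comp : ∀ g ∈ t, gᶜ ∈ σ₂ := by
        intro g hg
        rcases hσ₂.2.2 g (hσ₁.1 g (ht hg).1) with h' | h'
        · exact absurd h'.1 (ht hg).2
        · exact h'.1
      refine ⟨h, by simp, k, by simp, hσ₁.2.1 h (ht hh).1 k (ht hk).1, ?_, ?_,
        hσ₂.2.1 _ (comp h hh) _ (comp k hk)⟩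
      · obtain ⟨z, hz⟩ := Set.not_subset.mp (hta hh hk hhk)
        exact ⟨z, hz⟩
      · obtain ⟨z, hz⟩ := Set.not_subset.mp (hta hk hh hhk.symm)
        exact ⟨z, hz.2, hz.1⟩
  obtain ⟨f, hf1, hf2⟩ := dilworth_inf (σ₁ \ σ₂) r hanti
  refine ⟨fun _ => ?_, fun S hS hSinf => ?_⟩
  · have hsub : f '' (σ₁ \ σ₂) ⊆ Set.Iio r := by
      rintro _ ⟨x, hx, rfl⟩
      exact hf1 x hx
    have hfin : (f '' (σ₁ \ σ₂)).Finite := (Set.finite_Iio r).subset hsub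
    let e := hfin.toFinset.equivFin
    refine ⟨hfin.toFinset.card, ?_, fun i => {h | h ∈ σ₁ \ σ₂ ∧ f h = (e.symm i : ℕ)},
      ?_, ?_, ?_, ?_⟩
    · calc hfin.toFinset.card ≤ (Finset.range r).card := Finset.card_le_card (by
            intro j hj
            exact Finset.mem_range.mpr (hsub (hfin.mem_toFinset.mp hj)))
        _ = r := Finset.card_range r
    · intro i
      obtain ⟨h, hh, hh'⟩ := hfin.mem_toFinset.mp (e.symm i).2
      exact ⟨h, hh, hh'⟩
    · intro i _ j _ hij
      refine Set.disjoint_left.mpr ?_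
      rintro h ⟨_, h1⟩ ⟨_, h2⟩
      exact hij (e.symm.injective (Subtype.ext (h1.symm.trans h2)))
    · ext h
      simp only [Set.mem_iUnion, Set.mem_ofPred_eq]
      constructor
      · rintro ⟨_, h1, _⟩
        exact h1
      · intro hh
        exact ⟨e ⟨f h, hfin.mem_toFinset.mpr ⟨h, hh, rfl⟩⟩, hh, by simp⟩
    · rintro i h ⟨hh, hi⟩ k ⟨hk, hi'⟩ _
      exact hf2 h hh k hk (hi.trans hi'.symm)
  · obtain ⟨c, _, hc⟩ : ∃ c ∈ Set.Iio r, (S ∩ f ⁻¹' {c}).Infinite := by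
      by_contra hcon
      push Not at hcon
      refine hSinf (((Set.finite_Iio r).biUnion
        (fun c hc => hcon c hc)).subset ?_)
      intro h hh
      simp only [Set.mem_iUnion]
      exact ⟨f h, hf1 h (hS hh), hh, rfl⟩
    refine ⟨_, Set.inter_subset_left, hc, ?_⟩
    rintro h ⟨hh, hi⟩ k ⟨hk, hi'⟩ _
    exact hf2 h (hS hh) k (hS hk) (hi.trans hi'.symm)
end

section
/- Let X be a complete, finite-rank median space, x ∈ X, σ an ultrafilter on 𝓗(X), and Ω ⊆ σ \ σ_x a minimal UBS. Then the set Ω' of halfspaces k ∈ Ω that are not transverse to any diverging chain of halfspaces contained in Ω is a reduced UBS equivalent to Ω. -/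
open Metric Filter Set

universe u

/-- A diverging chain of halfspaces (with respect to the basepoint `x`):
a nested sequence of halfspaces whose distance from `x` tends to infinity. -/
def DivChain {X : Type u} [MetricSpace X] (x : X) (c : ℕ → Set X) : Prop :=
  (∀ n, IsHalfspace (c n)) ∧ (∀ n, c (n + 1) ⊆ c n) ∧
    Tendsto (fun n => infDist x (c n)) atTop atTop

/-- A set of halfspaces is inseparable if it contains every halfspace squeezed
between two of its members. -/
def Insep {X : Type u} [MetricSpace X] (Ω : Set (Set X)) : Prop :=
  ∀ j : Set X, IsHalfspace j → ∀ h ∈ Ω, ∀ k ∈ Ω, h ⊆ j → j ⊆ k → j ∈ Ω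

/-- A unidirectional boundary set (UBS) for the ultrafilter `σ`, with basepoint
`x`: an inseparable subset of `σ \ σ_x` containing a diverging chain. -/
def IsUBS {X : Type u} [MetricSpace X] (x : X) (σ Ω : Set (Set X)) : Prop :=
  Ω ⊆ σ \ sigmaPt x ∧ Insep Ω ∧ ∃ c : ℕ → Set X, DivChain x c ∧ ∀ n, c n ∈ Ω

/-- `Ω₁ ≼ Ω₂`: the halfspaces of `Ω₁ \ Ω₂` lie at uniformly bounded distance
from `x` (almost containment of UBS's). -/
def AlmostLE {X : Type u} [MetricSpace X] (x : X) (Ω₁ Ω₂ : Set (Set X)) : Prop :=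
  ∃ M : ℝ, ∀ h ∈ Ω₁ \ Ω₂, infDist x h ≤ M

/-- Equivalence of UBS's. -/
def UBSEquiv {X : Type u} [MetricSpace X] (x : X) (Ω₁ Ω₂ : Set (Set X)) : Prop :=
  AlmostLE x Ω₁ Ω₂ ∧ AlmostLE x Ω₂ Ω₁

/-- A UBS is minimal if every UBS almost contained in it almost contains it. -/
def MinimalUBS {X : Type u} [MetricSpace X] (x : X) (σ Ω : Set (Set X)) : Prop :=
  IsUBS x σ Ω ∧ ∀ Ω₀ : Set (Set X), IsUBS x σ Ω₀ → AlmostLE x Ω₀ Ω → AlmostLE x Ω Ω₀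

/-- A set of halfspaces is reduced if none of its members is transverse to a
diverging chain of halfspaces contained in it. -/
def ReducedUBS {X : Type u} [MetricSpace X] (x : X) (Ω : Set (Set X)) : Prop :=
  ∀ k ∈ Ω, ¬ ∃ c : ℕ → Set X, DivChain x c ∧ (∀ n, c n ∈ Ω) ∧ ∀ n, Transv k (c n)

/-- A set of halfspaces is strongly reduced if it is a finite disjoint union of
subsets, each totally ordered by inclusion and containing a diverging chain. -/
def StronglyReducedUBS {X : Type u} [MetricSpace X] (x : X) (Ω : Set (Set X)) : Prop :=
  ∃ (k : ℕ) (C : Fin k → Set (Set X)), 1 ≤ k ∧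
    (Set.univ : Set (Fin k)).PairwiseDisjoint C ∧
    (⋃ i, C i) = Ω ∧
    ∀ i, IsChain (· ⊆ ·) (C i) ∧ ∃ c : ℕ → Set X, DivChain x c ∧ ∀ n, c n ∈ C i

theorem aux_transv {X : Type u} [MetricSpace X] {x : X} {σ : Set (Set X)} {a b : Set X}
    (hσ : UltrafilterOn X σ) (ha : a ∈ σ \ sigmaPt x) (hb : b ∈ σ \ sigmaPt x)
    (h1 : ¬ a ⊆ b) (h2 : ¬ b ⊆ a) : Transv a b := by
  have hxa : x ∉ a := fun hx => ha.2 ⟨hσ.1 a ha.1, hx⟩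
  have hxb : x ∉ b := fun hx => hb.2 ⟨hσ.1 b hb.1, hx⟩
  obtain ⟨y, hy, hy'⟩ := Set.not_subset.1 h1
  obtain ⟨z, hz, hz'⟩ := Set.not_subset.1 h2
  exact ⟨hσ.2.1 a ha.1 b hb.1, ⟨y, hy, hy'⟩, ⟨z, hz', hz⟩, ⟨x, hxa, hxb⟩⟩

theorem aux_tail {X : Type u} [MetricSpace X] {x : X} {c : ℕ → Set X} (hc : DivChain x c)
    (M : ℝ) : ∃ N, ∀ n, M < infDist x (c (n + N)) := by
  obtain ⟨N, hN⟩ := Filter.eventually_atTop.1 (hc.2.2.eventually_gt_atTop M)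
  exact ⟨N, fun n => hN _ (by omega)⟩

theorem aux_shift {X : Type u} [MetricSpace X] {x : X} {c : ℕ → Set X} (hc : DivChain x c)
    (N : ℕ) : DivChain x (fun n => c (n + N)) := by
  refine ⟨fun n => hc.1 _, fun n => ?_, hc.2.2.comp (tendsto_add_atTop_nat N)⟩
  have := hc.2.1 (n + N)
  rwa [show n + N + 1 = n + 1 + N by omega] at this

theorem aux_bound {X : Type u} [MetricSpace X] {x : X} {σ Ω : Set (Set X)}
    (hΩ : MinimalUBS x σ Ω) {c : ℕ → Set X} (hc : DivChain x c) (hcΩ : ∀ n, c n ∈ Ω) :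
    ∃ M : ℝ, ∀ k ∈ Ω, M < infDist x k → ∃ m, c m ⊆ k := by
  let Ω₀ : Set (Set X) := {j | IsHalfspace j ∧ ∃ m n, c m ⊆ j ∧ j ⊆ c n}
  have hsub : Ω₀ ⊆ Ω := by
    rintro j ⟨hj, m, n, h1, h2⟩
    exact hΩ.1.2.1 j hj _ (hcΩ m) _ (hcΩ n) h1 h2
  have hU : IsUBS x σ Ω₀ := by
    refine ⟨hsub.trans hΩ.1.1, ?_, c, hc, fun n => ⟨hc.1 n, n, n, subset_rfl, subset_rfl⟩⟩
    rintro j hj h ⟨_, m, _, h1, _⟩ k ⟨_, _, n, _, h2⟩ hhj hjk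
    exact ⟨hj, m, n, h1.trans hhj, hjk.trans h2⟩
  obtain ⟨M, hM⟩ := hΩ.2 Ω₀ hU ⟨0, fun h hh => absurd (hsub hh.1) hh.2⟩
  refine ⟨M, fun k hk hlt => ?_⟩
  by_contra hne
  exact absurd (hM k ⟨hk, fun hk0 => hne (by obtain ⟨_, m, _, h, _⟩ := hk0; exact ⟨m, h⟩)⟩)
    (not_le.2 hlt)

/-- Let `X` be a complete, finite-rank median space, `x ∈ X`,
`σ` an ultrafilter on the halfspaces, and `Ω ⊆ σ \ σ_x` a minimal UBS.  Then the
set `Ω'` of halfspaces of `Ω` not transverse to any diverging chain contained in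
`Ω` is a reduced UBS equivalent to `Ω`. -/
theorem reduction_of_minimal_UBS
    {X : Type u} [MetricSpace X] [CompleteSpace X]
    (hX : IsMedianSpace X) (hfr : HasFiniteRank X)
    (x : X) (σ : Set (Set X)) (hσ : UltrafilterOn X σ)
    (Ω : Set (Set X)) (hΩ : MinimalUBS x σ Ω) :
    IsUBS x σ
      {k ∈ Ω | ¬ ∃ c : ℕ → Set X, DivChain x c ∧ (∀ n, c n ∈ Ω) ∧ ∀ n, Transv k (c n)} ∧
    ReducedUBS x
      {k ∈ Ω | ¬ ∃ c : ℕ → Set X, DivChain x c ∧ (∀ n, c n ∈ Ω) ∧ ∀ n, Transv k (c n)} ∧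
    UBSEquiv x
      {k ∈ Ω | ¬ ∃ c : ℕ → Set X, DivChain x c ∧ (∀ n, c n ∈ Ω) ∧ ∀ n, Transv k (c n)}
      Ω := by
  set Ω' : Set (Set X) :=
    {k ∈ Ω | ¬ ∃ c : ℕ → Set X, DivChain x c ∧ (∀ n, c n ∈ Ω) ∧ ∀ n, Transv k (c n)} with hΩ'
  have hsub : Ω' ⊆ Ω := fun k hk => hk.1
  obtain ⟨c, hc, hcΩ⟩ := hΩ.1.2.2
  obtain ⟨M, hM⟩ := aux_bound hΩ hc hcΩ
  have hbd : ∀ k ∈ Ω, M < infDist x k → k ∈ Ω' := by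
    intro k hk hlt
    refine ⟨hk, ?_⟩
    rintro ⟨d, hd, hdΩ, ht⟩
    obtain ⟨m, hm⟩ := hM k hk hlt
    obtain ⟨M', hM'⟩ := aux_bound hΩ hd hdΩ
    obtain ⟨N, hN⟩ := aux_tail hc M'
    obtain ⟨p, hp⟩ := hM' _ (hcΩ (m + N)) (hN m)
    have hanti : Antitone c := antitone_nat_of_succ_le hc.2.1
    have hpk : d p ⊆ k := hp.trans ((hanti (Nat.le_add_right m N)).trans hm)
    obtain ⟨y, hy1, hy2⟩ := (ht p).2.2.1
    exact hy1 (hpk hy2)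
  have hins : Insep Ω' := by
    intro j hj h hh k hk hhj hjk
    refine ⟨hΩ.1.2.1 j hj h hh.1 k hk.1 hhj hjk, ?_⟩
    rintro ⟨d, hd, hdΩ, ht⟩
    obtain ⟨N, hN⟩ := aux_tail hd (infDist x h)
    refine hh.2 ⟨_, aux_shift hd N, fun n => hdΩ _, fun n => ?_⟩
    refine aux_transv hσ (hΩ.1.1 hh.1) (hΩ.1.1 (hdΩ _)) ?_ ?_
    · intro hs
      have hne : h.Nonempty := (hσ.2.1 h (hΩ.1.1 hh.1).1 h (hΩ.1.1 hh.1).1).left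
      exact absurd (infDist_le_infDist_of_subset hs hne) (not_le.2 (hN n))
    · intro hs
      obtain ⟨y, hy1, hy2⟩ := (ht (n + N)).2.2.1
      exact hy1 (hhj (hs hy2))
  refine ⟨⟨hsub.trans hΩ.1.1, hins, ?_⟩, ?_, ?_, ?_⟩
  · obtain ⟨N, hN⟩ := aux_tail hc M
    exact ⟨_, aux_shift hc N, fun n => hbd _ (hcΩ _) (hN n)⟩
  · rintro k hk ⟨d, hd, hdΩ, ht⟩
    exact hk.2 ⟨d, hd, fun n => hsub (hdΩ n), ht⟩
  · exact ⟨0, fun h hh => absurd (hsub hh.1) hh.2⟩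
  · exact ⟨M, fun h hh => not_lt.1 fun hlt => hh.2 (hbd h hh.1 hlt)⟩
end

section
/- Let X be a complete, finite-rank median space, x ∈ X, σ an ultrafilter on 𝓗(X), and Ω ⊆ σ \ σ_x a minimal, strongly reduced UBS. Then for every d ≥ 0 there exists a constant C3 < +∞ (depending on Ω and d) such that h ⊆ k for all halfspaces h, k ∈ Ω with d(x,h) > C3 and d(x,k) ≤ d. -/
open Metric Filter Set

universe u

/-- Let `X` be a complete, finite-rank median space, `x ∈ X`,
`σ` an ultrafilter on the halfspaces, and `Ω ⊆ σ \ σ_x` a minimal, strongly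
reduced UBS.  For every `d ≥ 0` there is a constant `C₃` such that `h ⊆ k` for
all `h, k ∈ Ω` with `d(x,h) > C₃` and `d(x,k) ≤ d`. -/
theorem far_halfspaces_contained_in_near_ones
    {X : Type u} [MetricSpace X] [CompleteSpace X]
    (hX : IsMedianSpace X) (hfr : HasFiniteRank X)
    (x : X) (σ : Set (Set X)) (hσ : UltrafilterOn X σ)
    (Ω : Set (Set X)) (hΩ : MinimalUBS x σ Ω) (hsr : StronglyReducedUBS x Ω) :
    ∀ d : ℝ, 0 ≤ d → ∃ C₃ : ℝ, ∀ h ∈ Ω, ∀ k ∈ Ω,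
      C₃ < infDist x h → infDist x k ≤ d → h ⊆ k := by
  obtain ⟨⟨hsub, hins, -⟩, hmin⟩ := hΩ
  obtain ⟨k, C, -, -, hU, hC⟩ := hsr
  intro d _
  have hCΩ : ∀ i, ∀ s ∈ C i, s ∈ Ω := fun i s hs => hU ▸ Set.mem_iUnion.2 ⟨i, hs⟩
  have hne : ∀ s ∈ Ω, s.Nonempty := fun s hs => by
    simpa using hσ.2.1 s (hsub hs).1 s (hsub hs).1
  -- inside one chain, strictly farther means contained
  have hchain : ∀ i, ∀ s ∈ C i, ∀ t ∈ C i, infDist x t < infDist x s → s ⊆ t := by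
    intro i s hs t ht hlt
    rcases (hC i).1.total hs ht with h | h
    · exact h
    · exact absurd (infDist_le_infDist_of_subset h (hne t (hCΩ i t ht))) (not_le.2 hlt)
  have key : ∀ i j, ∃ R : ℝ, ∀ h ∈ C j, ∀ t ∈ C i, R < infDist x h → infDist x t ≤ d → h ⊆ t := by
    intro i j
    obtain ⟨a, ⟨-, -, hat⟩, haC⟩ := (hC i).2
    obtain ⟨c, hc, hcC⟩ := (hC j).2
    let Ω₀ : Set (Set X) := {s | IsHalfspace s ∧ ∃ m n, c n ⊆ s ∧ s ⊆ c m}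
    have hle : Ω₀ ⊆ Ω := by
      rintro s ⟨hs, m, n, h1, h2⟩
      exact hins s hs _ (hCΩ j _ (hcC n)) _ (hCΩ j _ (hcC m)) h1 h2
    have hUBS : IsUBS x σ Ω₀ := by
      refine ⟨hle.trans hsub, ?_, c, hc, fun n => ⟨hc.1 n, n, n, subset_rfl, subset_rfl⟩⟩
      rintro s hs h ⟨-, -, n, h1, -⟩ t ⟨-, m, -, -, h2⟩ h3 h4
      exact ⟨hs, m, n, h1.trans h3, h4.trans h2⟩
    obtain ⟨M, hM⟩ := hmin Ω₀ hUBS ⟨0, fun h hh => absurd (hle hh.1) hh.2⟩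
    obtain ⟨p, hp⟩ := (hat.eventually_gt_atTop (max M d)).exists
    have hp0 : a p ∈ Ω₀ := by
      by_contra hcon
      exact absurd (hM _ ⟨hCΩ i _ (haC p), hcon⟩) (not_le.2 ((le_max_left _ _).trans_lt hp))
    obtain ⟨-, -, n, hn, -⟩ := hp0
    refine ⟨infDist x (c n), fun h hh t ht h1 h2 => ?_⟩
    exact ((hchain j h hh _ (hcC n) h1).trans hn).trans
      (hchain i _ (haC p) t ht (h2.trans_lt ((le_max_right _ _).trans_lt hp)))
  choose R hR using key
  obtain ⟨B, hB⟩ := (Set.finite_range (fun q : Fin k × Fin k => R q.1 q.2)).bddAbove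
  refine ⟨B, fun h hh t ht h1 h2 => ?_⟩
  rw [← hU] at hh ht
  obtain ⟨j, hj⟩ := Set.mem_iUnion.1 hh
  obtain ⟨i, hi⟩ := Set.mem_iUnion.1 ht
  exact hR i j h hj t hi ((hB ⟨(i, j), rfl⟩).trans_lt h1) h2
end

section
/- Let X be a median space, x ∈ X, σ an ultrafilter on 𝓗(X), and Ξ ⊆ σ \ σ_x a subset with the property that whenever h ∈ σ, k ∈ Ξ and h ⊆ k, then h ∈ Ξ. Then the set (σ \ Ξ) ∪ Ξ*, where Ξ* := {h* : h ∈ Ξ}, is an ultrafilter on 𝓗(X). -/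
open Metric Filter Set

universe u

/-- Let `X` be a median space, `x ∈ X`, `σ` an ultrafilter on
the halfspaces and `Ξ ⊆ σ \ σ_x` such that every `h ∈ σ` contained in some
member of `Ξ` belongs to `Ξ`.  Then `(σ \ Ξ) ∪ Ξ*` is an ultrafilter. -/
theorem flipping_a_downward_closed_subset_of_an_ultrafilter
    {X : Type u} [MetricSpace X] (hX : IsMedianSpace X)
    (x : X) (σ : Set (Set X)) (hσ : UltrafilterOn X σ)
    (Ξ : Set (Set X)) (hΞ : Ξ ⊆ σ \ sigmaPt x)
    (hdown : ∀ h ∈ σ, ∀ k ∈ Ξ, h ⊆ k → h ∈ Ξ) :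
    UltrafilterOn X ((σ \ Ξ) ∪ (fun h : Set X => hᶜ) '' Ξ) := by
  obtain ⟨h1, h2, h3⟩ := hσ
  have hx : ∀ k ∈ Ξ, x ∈ kᶜ := fun k hk hxk => (hΞ hk).2 ⟨h1 k (hΞ hk).1, hxk⟩
  have hmix : ∀ h ∈ σ, h ∉ Ξ → ∀ k ∈ Ξ, (h ∩ kᶜ).Nonempty := by
    intro h hh hn k hk
    by_contra hc
    refine hn (hdown h hh k hk fun y hy => ?_)
    by_contra hyk
    exact hc ⟨y, hy, hyk⟩
  have hmem : ∀ h : Set X, h ∈ (fun h : Set X => hᶜ) '' Ξ ↔ hᶜ ∈ Ξ := by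
    intro h
    constructor
    · rintro ⟨k, hk, rfl⟩
      simpa using hk
    · intro hk
      exact ⟨hᶜ, hk, compl_compl h⟩
  refine ⟨?_, ?_, ?_⟩
  · rintro h (⟨hh, -⟩ | ⟨k, hk, rfl⟩)
    · exact h1 h hh
    · have := h1 k (hΞ hk).1
      exact ⟨this.2, by simpa using this.1⟩
  · rintro h (⟨hh, hn⟩ | ⟨k, hk, rfl⟩) h' (⟨hh', hn'⟩ | ⟨k', hk', rfl⟩)
    · exact h2 h hh h' hh'
    · exact hmix h hh hn k' hk'
    · rw [inter_comm]
      exact hmix h' hh' hn' k hk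
    · exact ⟨x, hx k hk, hx k' hk'⟩
  · intro h hh
    have a : h ∈ Ξ → h ∈ σ := fun hk => (hΞ hk).1
    have b : hᶜ ∈ Ξ → hᶜ ∈ σ := fun hk => (hΞ hk).1
    have c := h3 h hh
    simp only [mem_union, hmem, mem_diff, compl_compl]
    tauto
end
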